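/- Let r_n = |RB_n| be the number of signed simsun permutations of rank n, and let α = √2. Then there exists ε > 0 such that for every real t with |t| < ε, the series Σ_{n≥0} r_n·tⁿ/n! converges and equals (cos t − sin t)^{α/2 − 1} / ((α − sin t − cos t)^{α/2} · (1+α)^{α/2}). -/

import Mathlib

/-!
Every signed simsun permutation of rank `n + 1` arises uniquely by inserting `±(n+1)` into one
of rank `n` (`insertMax`), and it is simsun iff the smaller one is and the new word has no double
descent (`isSimsun_insertMax`). Both this condition and the effect of an insertion depend only on
the descent pattern (`gaps`) of the word: inserting `+(n+1)` replaces a step by "ascent, descent",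
inserting `-(n+1)` replaces it by "descent, ascent" (`children`).

Give a pattern with `d` descents in rank `n` the weight `p y^d w^(n-2d)` if it does not start with
a descent, and `q y^d w^(n+1-2d)` if it does; patterns with a double descent get weight `0`.
If `w, y, p, q` are functions of `t` with
`w' = 2y`, `y' = 2yw`, `p' = pw + qy`, `q' = p`,
then the derivative of the weight of a pattern without double descents is the total weight of its
children (`hasDerivAt_wt`). Hence the `n`-th derivative of `p` is the total weight of `RB n`
(`iteratedDeriv_F`). If all four functions equal `1` at `0`, its value at `0` is `|RB n|`.

With `c = cos t`, `s = sin t`, a solution of this system with these initial values is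
`w = (c + s)/(c - s)`, `y = 1/(c - s)²`, `p = F`, `q = (c - s) F`, where `F` is the claimed closed
form. Since `F` is analytic at `0`, its Taylor series is the generating function.
-/

open Finset

/-- A signed permutation of rank `n`, encoded as an (unsigned) permutation of
`Fin n` together with a choice of sign for each position: the entry
`π(i+1)` of the word is `±(σ(i)+1)` where the sign is `-` iff `sgn i = true`. -/
abbrev SignedPerm (n : ℕ) := Equiv.Perm (Fin n) × (Fin n → Bool)

/-- The entry `π(j+1)` of the word of a signed permutation. -/
def entry {n : ℕ} (π : SignedPerm n) (j : Fin n) : ℤ :=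
  (if π.2 j then -1 else 1) * (((π.1 j : ℕ) : ℤ) + 1)

/-- The word `π(0)π(1)⋯π(n)` of a signed permutation (with the leading `0`). -/
def word {n : ℕ} (π : SignedPerm n) : List ℤ :=
  0 :: List.ofFn (entry π)

/-- `π(i)` for `0 ≤ i ≤ n` (and `0` outside this range). -/
def wordFn {n : ℕ} (π : SignedPerm n) (i : ℕ) : ℤ :=
  if h : 1 ≤ i ∧ i ≤ n then entry π ⟨i - 1, by omega⟩ else 0

/-- A word has no double descent: no three consecutive strictly decreasing entries. -/
def noDD : List ℤ → Bool
  | a :: b :: c :: rest => (!(decide (b < a) && decide (c < b))) && noDD (b :: c :: rest)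
  | _ => true

/-- A signed permutation is simsun if for every `0 ≤ k ≤ n`, deleting the entries
`±n, …, ±(n-k+1)` (i.e. keeping the entries of absolute value `≤ m := n - k`) from the
word `π(0)π(1)⋯π(n)` leaves a word with no three consecutive strictly decreasing
entries. -/
def IsSimsun {n : ℕ} (π : SignedPerm n) : Prop :=
  ∀ m ≤ n, noDD ((word π).filter (fun a => a.natAbs ≤ m)) = true

instance {n : ℕ} : DecidablePred (IsSimsun (n := n)) := fun _ => by
  unfold IsSimsun; infer_instance

/-- The type-B descent number `des_B(π) = #{0 ≤ i ≤ n-1 : π(i) > π(i+1)}`. -/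
def desB {n : ℕ} (π : SignedPerm n) : ℕ :=
  ((Finset.range n).filter (fun i => wordFn π (i + 1) < wordFn π i)).card

/-- The set of signed simsun permutations of rank `n`. -/
def RB (n : ℕ) : Finset (SignedPerm n) := univ.filter IsSimsun

/-- Signed simsun permutations with `π(1) > 0` (for `n = 0`, the empty permutation
is included, following the convention `R⁺_0 = 1`). -/
def RBp (n : ℕ) : Finset (SignedPerm n) :=
  (RB n).filter (fun π => 0 < wordFn π 1 ∨ n = 0)

/-- Signed simsun permutations with `π(1) < 0`. -/
def RBm (n : ℕ) : Finset (SignedPerm n) :=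
  (RB n).filter (fun π => wordFn π 1 < 0)

/-- A signed permutation is even-signed if its word has an even number of negative entries. -/
def IsEvenSigned {n : ℕ} (π : SignedPerm n) : Prop :=
  (univ.filter (fun j => π.2 j = true)).card % 2 = 0

instance {n : ℕ} : DecidablePred (IsEvenSigned (n := n)) := fun _ => by
  unfold IsEvenSigned; infer_instance

def RD (n : ℕ) : Finset (SignedPerm n) := (RB n).filter IsEvenSigned
def RT (n : ℕ) : Finset (SignedPerm n) := (RB n).filter (fun π => ¬ IsEvenSigned π)
def RDp (n : ℕ) : Finset (SignedPerm n) := (RD n).filter (fun π => 0 < wordFn π 1 ∨ n = 0)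
def RDm (n : ℕ) : Finset (SignedPerm n) := (RD n).filter (fun π => wordFn π 1 < 0)
def RTp (n : ℕ) : Finset (SignedPerm n) := (RT n).filter (fun π => 0 < wordFn π 1 ∨ n = 0)
def RTm (n : ℕ) : Finset (SignedPerm n) := (RT n).filter (fun π => wordFn π 1 < 0)

/-- `R(n,k)`, as an integer, vanishing for `k < 0`. -/
def Rcnt (n : ℕ) (k : ℤ) : ℤ := ((RB n).filter (fun π => (desB π : ℤ) = k)).card
def Rpcnt (n : ℕ) (k : ℤ) : ℤ := ((RBp n).filter (fun π => (desB π : ℤ) = k)).card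
def Rmcnt (n : ℕ) (k : ℤ) : ℤ := ((RBm n).filter (fun π => (desB π : ℤ) = k)).card
def Dcnt (n : ℕ) (k : ℤ) : ℤ := ((RD n).filter (fun π => (desB π : ℤ) = k)).card
def Tcnt (n : ℕ) (k : ℤ) : ℤ := ((RT n).filter (fun π => (desB π : ℤ) = k)).card
def Dpcnt (n : ℕ) (k : ℤ) : ℤ := ((RDp n).filter (fun π => (desB π : ℤ) = k)).card
def Dmcnt (n : ℕ) (k : ℤ) : ℤ := ((RDm n).filter (fun π => (desB π : ℤ) = k)).card
def Tpcnt (n : ℕ) (k : ℤ) : ℤ := ((RTp n).filter (fun π => (desB π : ℤ) = k)).card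
def Tmcnt (n : ℕ) (k : ℤ) : ℤ := ((RTm n).filter (fun π => (desB π : ℤ) = k)).card

/-! ### Descent patterns -/

/-- The descent pattern of a word: the `i`-th entry records whether the `i`-th step of the
word is a descent. -/
def gaps : List ℤ → List Bool
  | a :: b :: l => decide (b < a) :: gaps (b :: l)
  | _ => []

/-- No two consecutive descents. -/
def Good (g : List Bool) : Prop := g.IsChain (fun a b => ¬(a = true ∧ b = true))

lemma noDD_iff_good : ∀ l : List ℤ, noDD l = true ↔ Good (gaps l)
  | [] => by simp [noDD, gaps, Good]
  | [a] => by simp [noDD, gaps, Good]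
  | [a, b] => by simp [noDD, gaps, Good]
  | a :: b :: c :: l => by
    have ih := noDD_iff_good (b :: c :: l)
    simp only [noDD, gaps, Good, List.isChain_cons_cons, Bool.and_eq_true] at ih ⊢
    rw [ih]
    refine and_congr_left fun _ => ?_
    simp [imp_iff_not_or]

/-- All patterns obtained by inserting a new entry of maximal absolute value somewhere after
the first entry: `+n` replaces one step by an ascent and a descent, `-n` replaces it by a
descent and an ascent, and at the end either sign appends one step. -/
def children : List Bool → List (List Bool)
  | [] => [[false], [true]]
  | b :: g => (false :: true :: g) :: (true :: false :: g) :: (children g).map (b :: ·)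

/-- Inserting `x` and `-x` in all positions after the head of `a :: l`, where `x` exceeds
all entries in absolute value, yields exactly the `children` of the descent pattern. -/
lemma sum_insert_eq (x : ℤ) : ∀ (l : List ℤ) (a : ℤ) (f : List Bool → ℝ),
    (∀ b ∈ a :: l, b < x ∧ -x < b) →
    ∑ i ∈ range (l.length + 1), (f (gaps (a :: l.insertIdx i x))
      + f (gaps (a :: l.insertIdx i (-x)))) = ((children (gaps (a :: l))).map f).sum
  | [], a, f, h => by
    have := h a (by simp)
    have e1 : decide (x < a) = false := by simp [this.1.le]
    simp [gaps, children, e1, this.2]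
  | b :: l, a, f, h => by
    have ha := h a (by simp)
    have hb := h b (by simp)
    have ih := sum_insert_eq x l b (fun g => f (decide (b < a) :: g))
      (fun c hc => h c (List.mem_cons_of_mem _ hc))
    rw [List.length_cons, Finset.sum_range_succ']
    simp only [List.insertIdx_succ_cons, List.insertIdx_zero, gaps, children, List.map_cons,
      List.sum_cons, List.map_map]
    rw [ih]
    have e1 : decide (x < a) = false := by simp [ha.1.le]
    have e2 : decide (b < x) = true := by simp [hb.1]
    have e3 : decide (-x < a) = true := by simp [ha.2]
    have e4 : decide (b < -x) = false := by simp [hb.2.le]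
    rw [e1, e2, e3, e4]
    simp only [Function.comp_def]
    ring

/-! ### The weight of a pattern -/

mutual
/-- The weight of a pattern that parses into blocks "ascent" (weight `w`) and
"ascent, descent" (weight `y`); it is `0` if there is no such parsing. -/
def wt0 (w y : ℝ) : List Bool → ℝ
  | [] => 1
  | true :: _ => 0
  | false :: g => w * wt0 w y g + y * wt1 w y g

/-- The weight `wt0` of what follows an initial descent; `0` if there is no initial descent. -/
def wt1 (w y : ℝ) : List Bool → ℝ
  | [] => 0
  | true :: g => wt0 w y g
  | false :: _ => 0
end

/-- The weight of a pattern: `p` marks words starting with an ascent (or empty), `q * y` words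
starting with a descent. -/
def wt (w y p q : ℝ) (g : List Bool) : ℝ := p * wt0 w y g + q * y * wt1 w y g

lemma wt_eq_zero_aux (w y : ℝ) : ∀ g, ¬ Good g → wt0 w y g = 0 ∧ wt1 w y g = 0
  | [], h => by simp [Good] at h
  | true :: g, h => by
    refine ⟨by simp [wt0], ?_⟩
    by_cases hg : Good g
    · rcases g with _ | ⟨_ | _, g⟩
      · simp [Good] at h
      · exact absurd hg (by simpa [Good] using h)
      · simp [wt1, wt0]
    · exact (wt_eq_zero_aux w y g hg).1
  | false :: g, h => by
    refine ⟨?_, by simp [wt1]⟩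
    have := wt_eq_zero_aux w y g (by
      intro hg
      apply h
      rcases g with _ | ⟨b, g⟩
      · simp [Good]
      · simpa [Good] using hg)
    simp [wt0, this.1, this.2]

lemma wt_eq_zero (w y p q : ℝ) {g : List Bool} (h : ¬ Good g) : wt w y p q g = 0 := by
  simp [wt, wt_eq_zero_aux w y g h]

lemma Good.tail {b : Bool} {g : List Bool} (h : Good (b :: g)) : Good g :=
  List.IsChain.tail h

lemma wt1_of_good_cons (w y : ℝ) {g : List Bool} (h : Good (true :: g)) : wt1 w y g = 0 := by
  rcases g with _ | ⟨_ | _, g⟩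
  · simp [wt1]
  · simp [wt1]
  · simp [Good] at h

lemma wt_one_aux : ∀ g, Good g → wt0 1 1 g + wt1 1 1 g = 1
  | [], _ => by simp [wt0, wt1]
  | true :: g, h => by
    have := wt_one_aux g h.tail
    rw [wt1_of_good_cons 1 1 h] at this
    simpa [wt0, wt1] using this
  | false :: g, h => by
    have := wt_one_aux g h.tail
    simpa [wt0, wt1] using this

lemma wt_one {g : List Bool} (h : Good g) : wt 1 1 1 1 g = 1 := by
  simpa [wt] using wt_one_aux g h

lemma sum_map_mul (l : List (List Bool)) (c d : ℝ) (f g : List Bool → ℝ) :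
    (l.map (fun x => c * f x + d * g x)).sum = c * (l.map f).sum + d * (l.map g).sum := by
  rw [List.sum_map_add, List.sum_map_mul_left, List.sum_map_mul_left]

/-- If `w' = 2y` and `y' = 2yw`, then differentiating the block weights amounts to summing
over children, up to correction terms for insertions at the boundary. -/
lemma hasDerivAt_wt_aux {w y : ℝ → ℝ} {t : ℝ} (hw : HasDerivAt w (2 * y t) t)
    (hy : HasDerivAt y (2 * y t * w t) t) : ∀ g, Good g →
    HasDerivAt (fun s => wt0 (w s) (y s) g)
      (((children g).map (wt0 (w t) (y t))).sum - w t * wt0 (w t) (y t) g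
        - y t * wt1 (w t) (y t) g) t ∧
    HasDerivAt (fun s => wt1 (w s) (y s) g)
      (((children g).map (wt1 (w t) (y t))).sum - wt0 (w t) (y t) g
        - 2 * w t * wt1 (w t) (y t) g) t
  | [], _ => by
    constructor
    · simpa [wt0, wt1, children] using hasDerivAt_const t (1 : ℝ)
    · simpa [wt0, wt1, children] using hasDerivAt_const t (0 : ℝ)
  | true :: g, h => by
    obtain ⟨h0, h1⟩ := hasDerivAt_wt_aux hw hy g h.tail
    have hz := wt1_of_good_cons (w t) (y t) h
    constructor
    · simp only [wt0]
      convert! hasDerivAt_const t (0 : ℝ) using 1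
      simp [children, wt0, wt1, Function.comp_def]
    · simp only [wt1]
      convert! h0 using 1
      simp only [children, List.map_cons, List.map_map, List.sum_cons, Function.comp_def,
        wt0, wt1, hz]
      ring
  | false :: g, h => by
    obtain ⟨h0, h1⟩ := hasDerivAt_wt_aux hw hy g h.tail
    constructor
    · simp only [wt0]
      convert! (hw.mul h0).add (hy.mul h1) using 1
      simp only [children, List.map_cons, List.map_map, List.sum_cons, Function.comp_def,
        wt0, wt1, sum_map_mul]
      ring
    · simp only [wt1]
      convert! hasDerivAt_const t (0 : ℝ) using 1
      simp [children, wt0, wt1, Function.comp_def]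

/-- If moreover `p' = pw + qy` and `q' = p`, differentiating the weight of a pattern gives
exactly the total weight of its children. -/
lemma hasDerivAt_wt {w y p q : ℝ → ℝ} {t : ℝ} (hw : HasDerivAt w (2 * y t) t)
    (hy : HasDerivAt y (2 * y t * w t) t) (hp : HasDerivAt p (p t * w t + q t * y t) t)
    (hq : HasDerivAt q (p t) t) {g : List Bool} (hg : Good g) :
    HasDerivAt (fun s => wt (w s) (y s) (p s) (q s) g)
      ((children g).map (wt (w t) (y t) (p t) (q t))).sum t := by
  obtain ⟨h0, h1⟩ := hasDerivAt_wt_aux hw hy g hg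
  unfold wt
  convert! (hp.mul h0).add ((hq.mul hy).mul h1) using 1
  simp only [sum_map_mul, Pi.mul_apply]
  ring

/-! ### Inserting the largest entry -/

/-- Insert the entry `±(n+1)` (negative iff `b`) at position `i` of a signed permutation of
rank `n`. -/
def insertMax {n : ℕ} (x : SignedPerm n × Fin (n + 1) × Bool) : SignedPerm (n + 1) :=
  (((finSuccEquiv' x.2.1).trans x.1.1.optionCongr).trans (finSuccEquiv' (Fin.last n)).symm,
    Fin.insertNth (α := fun _ => Bool) x.2.1 x.2.2 x.1.2)

lemma insertMax_fst_same {n : ℕ} (π : SignedPerm n) (i : Fin (n + 1)) (b : Bool) :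
    (insertMax (π, i, b)).1 i = Fin.last n := by
  simp [insertMax]

lemma insertMax_fst_succAbove {n : ℕ} (π : SignedPerm n) (i : Fin (n + 1)) (b : Bool)
    (j : Fin n) : (insertMax (π, i, b)).1 (i.succAbove j) = (π.1 j).castSucc := by
  simp [insertMax]

lemma insertMax_injective (n : ℕ) : Function.Injective (insertMax (n := n)) := by
  rintro ⟨π, i, b⟩ ⟨π', i', b'⟩ h
  have hi : i = i' := by
    apply (insertMax (π, i, b)).1.injective
    rw [insertMax_fst_same, h, insertMax_fst_same]
  subst hi
  have h2 : Fin.insertNth (α := fun _ => Bool) i b π.2 = Fin.insertNth i b' π'.2 :=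
    congrArg Prod.snd h
  rw [Fin.insertNth_inj] at h2
  have h1 : π.1 = π'.1 := by
    ext j
    have := insertMax_fst_succAbove π i b j
    rw [h, insertMax_fst_succAbove] at this
    rw [Fin.castSucc_injective _ this]
  rw [Prod.ext h1 h2.2, h2.1]

lemma insertMax_bijective (n : ℕ) : Function.Bijective (insertMax (n := n)) := by
  rw [Fintype.bijective_iff_injective_and_card]
  refine ⟨insertMax_injective n, ?_⟩
  simp [Fintype.card_perm, Nat.factorial_succ, pow_succ]
  ring

/-- The entry `±(n+1)`. -/
def maxEntry (n : ℕ) (b : Bool) : ℤ := (if b then -1 else 1) * ((n : ℤ) + 1)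

lemma ofFn_insertNth {α : Type*} {n : ℕ} (i : Fin (n + 1)) (x : α) (f : Fin n → α) :
    List.ofFn (Fin.insertNth (α := fun _ => α) i x f) = (List.ofFn f).insertIdx i x := by
  have hi := i.2
  apply List.ext_getElem
  · rw [List.length_insertIdx_of_le_length (by simp; omega)]
    simp
  · intro j h1 h2
    simp only [List.length_ofFn] at h1
    rw [List.getElem_insertIdx, List.getElem_ofFn]
    split_ifs with h3 h4
    · rw [Fin.insertNth_apply_below (by exact h3)]
      simp
      rfl
    · subst h4
      simp
    · rw [Fin.insertNth_apply_above (by rw [Fin.lt_def]; simp; omega)]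
      simp
      rfl

lemma entry_insertMax {n : ℕ} (π : SignedPerm n) (i : Fin (n + 1)) (b : Bool) :
    entry (insertMax (π, i, b)) =
      Fin.insertNth (α := fun _ => ℤ) i (maxEntry n b) (entry π) := by
  rw [Fin.eq_insertNth_iff]
  constructor
  · rw [entry, insertMax_fst_same]
    simp [insertMax, maxEntry]
  · funext j
    rw [Fin.removeNth, entry, insertMax_fst_succAbove]
    simp [insertMax, entry]

lemma word_insertMax {n : ℕ} (π : SignedPerm n) (i : Fin (n + 1)) (b : Bool) :
    word (insertMax (π, i, b)) = 0 :: (List.ofFn (entry π)).insertIdx i (maxEntry n b) := by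
  rw [word, entry_insertMax, ofFn_insertNth]

lemma natAbs_maxEntry (n : ℕ) (b : Bool) : (maxEntry n b).natAbs = n + 1 := by
  cases b <;> simp [maxEntry] <;> omega

lemma natAbs_le_of_mem_word {n : ℕ} (π : SignedPerm n) {a : ℤ} (h : a ∈ word π) :
    a.natAbs ≤ n := by
  simp only [word, List.mem_cons, List.mem_ofFn] at h
  rcases h with rfl | ⟨j, rfl⟩
  · simp
  · have := (π.1 j).2
    unfold entry
    split_ifs <;> omega

lemma filter_insertIdx {α : Type*} (P : α → Bool) (x : α) (hx : P x = false) :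
    ∀ (l : List α) (i : ℕ), (l.insertIdx i x).filter P = l.filter P
  | l, 0 => by simp [hx]
  | [], i + 1 => by simp
  | a :: l, i + 1 => by
    rw [List.insertIdx_succ_cons, List.filter_cons, List.filter_cons, filter_insertIdx P x hx l i]

lemma filter_word_self {n : ℕ} (π : SignedPerm n) :
    (word π).filter (fun a => a.natAbs ≤ n) = word π := by
  rw [List.filter_eq_self]
  intro a ha
  simpa using natAbs_le_of_mem_word π ha

lemma IsSimsun.good {n : ℕ} {π : SignedPerm n} (h : IsSimsun π) : Good (gaps (word π)) := by
  have := h n le_rfl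
  rwa [filter_word_self, noDD_iff_good] at this

lemma isSimsun_insertMax {n : ℕ} (π : SignedPerm n) (i : Fin (n + 1)) (b : Bool) :
    IsSimsun (insertMax (π, i, b)) ↔
      IsSimsun π ∧ Good (gaps (word (insertMax (π, i, b)))) := by
  have key : ∀ m ≤ n, (word (insertMax (π, i, b))).filter (fun a => a.natAbs ≤ m) =
      (word π).filter (fun a => a.natAbs ≤ m) := by
    intro m hm
    rw [word_insertMax, word, List.filter_cons, List.filter_cons, filter_insertIdx]
    simp [natAbs_maxEntry]
    omega
  constructor
  · intro h
    refine ⟨fun m hm => ?_, h.good⟩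
    rw [← key m hm]
    exact h m (by omega)
  · rintro ⟨h, hg⟩ m hm
    rcases Nat.lt_or_ge n m with hlt | hge
    · obtain rfl : m = n + 1 := by omega
      rw [filter_word_self, noDD_iff_good]
      exact hg
    · rw [key m hge]
      exact h m hge

/-- The recursive structure of simsun permutations: a sum over rank `n + 1` of a function of
the descent pattern vanishing on bad patterns is a sum over children of patterns of rank `n`. -/
lemma sum_RB_succ (n : ℕ) (f : List Bool → ℝ) (hf : ∀ g, ¬ Good g → f g = 0) :
    ∑ π ∈ RB (n + 1), f (gaps (word π)) =
      ∑ π ∈ RB n, ((children (gaps (word π))).map f).sum := by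
  classical
  unfold RB
  rw [Finset.sum_filter, Finset.sum_filter,
    ← (insertMax_bijective n).sum_comp
      (fun π => if IsSimsun π then f (gaps (word π)) else 0), Fintype.sum_prod_type]
  refine Finset.sum_congr rfl fun π _ => ?_
  have hterm : ∀ x : Fin (n + 1) × Bool,
      (if IsSimsun (insertMax (π, x)) then f (gaps (word (insertMax (π, x)))) else 0) =
      if IsSimsun π then f (gaps (0 :: (List.ofFn (entry π)).insertIdx x.1 (maxEntry n x.2)))
      else 0 := by
    rintro ⟨i, b⟩
    simp only [isSimsun_insertMax, ← word_insertMax]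
    by_cases h1 : IsSimsun π <;>
      by_cases h2 : Good (gaps (word (insertMax (π, i, b)))) <;> simp [h1, h2, hf]
  rw [Finset.sum_congr rfl fun x _ => hterm x]
  split_ifs with hs
  · have hmem : ∀ b ∈ (0 : ℤ) :: List.ofFn (entry π),
        b < ((n : ℤ) + 1) ∧ -((n : ℤ) + 1) < b := by
      intro b hb
      have := natAbs_le_of_mem_word π hb
      omega
    have := sum_insert_eq ((n : ℤ) + 1) (List.ofFn (entry π)) 0 f hmem
    rw [word, ← this, Fintype.sum_prod_type, List.length_ofFn, Finset.sum_range]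
    refine Finset.sum_congr rfl fun i _ => ?_
    rw [Fintype.sum_bool, add_comm]
    simp [maxEntry]
  · simp

/-! ### The closed form -/

/-- The closed form of the generating function. -/
noncomputable def F (t : ℝ) : ℝ :=
  (Real.cos t - Real.sin t) ^ (Real.sqrt 2 / 2 - 1) /
    ((Real.sqrt 2 - Real.sin t - Real.cos t) ^ (Real.sqrt 2 / 2) *
      (1 + Real.sqrt 2) ^ (Real.sqrt 2 / 2))

/-- `(cos t + sin t) / (cos t - sin t)`, the weight of an unpaired ascent. -/
noncomputable def wFn (t : ℝ) : ℝ := (Real.cos t + Real.sin t) / (Real.cos t - Real.sin t)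

/-- `1 / (cos t - sin t)²`, the weight of an ascent-descent pair. -/
noncomputable def yFn (t : ℝ) : ℝ := 1 / (Real.cos t - Real.sin t) ^ 2

/-- The factor marking words that start with a descent. -/
noncomputable def qFn (t : ℝ) : ℝ := (Real.cos t - Real.sin t) * F t

/-- The open neighbourhood of `0` on which the bases of the real powers in `F` are positive. -/
def U : Set ℝ := {t | 0 < Real.cos t - Real.sin t ∧ 0 < Real.sqrt 2 - Real.sin t - Real.cos t}

lemma isOpen_U : IsOpen U := by
  have h1 : Continuous fun t => Real.cos t - Real.sin t := by fun_prop
  have h2 : Continuous fun t => Real.sqrt 2 - Real.sin t - Real.cos t := by fun_prop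
  exact (isOpen_lt continuous_const h1).inter (isOpen_lt continuous_const h2)

lemma one_lt_sqrt_two : 1 < Real.sqrt 2 := by
  rw [Real.lt_sqrt] <;> norm_num

lemma zero_mem_U : (0 : ℝ) ∈ U := by
  have := one_lt_sqrt_two
  constructor <;> simp [this]

lemma F_zero : F 0 = 1 := by
  have h := one_lt_sqrt_two
  unfold F
  rw [← Real.mul_rpow (by simp [h.le]) (by linarith)]
  have : (Real.sqrt 2 - Real.sin 0 - Real.cos 0) * (1 + Real.sqrt 2) = 1 := by
    simp
    nlinarith [Real.sq_sqrt (show (0 : ℝ) ≤ 2 by norm_num)]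
  rw [this]
  simp

lemma hasDerivAt_cos_sub_sin (t : ℝ) : HasDerivAt (fun s => Real.cos s - Real.sin s)
    (-(Real.cos t + Real.sin t)) t := by
  convert! (Real.hasDerivAt_cos t).sub (Real.hasDerivAt_sin t) using 1
  ring

lemma hasDerivAt_wFn {t : ℝ} (ht : t ∈ U) : HasDerivAt wFn (2 * yFn t) t := by
  have h1 := ht.1.ne'
  convert! ((Real.hasDerivAt_cos t).add (Real.hasDerivAt_sin t)).div
    (hasDerivAt_cos_sub_sin t) h1 using 1
  simp only [yFn, Pi.add_apply]
  field_simp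
  linarith [Real.sin_sq_add_cos_sq t]

lemma hasDerivAt_yFn {t : ℝ} (ht : t ∈ U) : HasDerivAt yFn (2 * yFn t * wFn t) t := by
  have h1 := ht.1.ne'
  convert! (hasDerivAt_const t (1 : ℝ)).div ((hasDerivAt_cos_sub_sin t).pow 2)
    (pow_ne_zero 2 h1) using 1
  simp only [yFn, wFn, Pi.pow_apply]
  field_simp
  ring

lemma hasDerivAt_F {t : ℝ} (ht : t ∈ U) :
    HasDerivAt F (F t * wFn t + qFn t * yFn t) t := by
  obtain ⟨hu, hv⟩ := ht
  have hd : HasDerivAt (fun s => Real.sqrt 2 - Real.sin s - Real.cos s)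
      (Real.sin t - Real.cos t) t := by
    convert! ((Real.hasDerivAt_sin t).const_sub (Real.sqrt 2)).sub (Real.hasDerivAt_cos t) using 1
    ring
  have hK : 0 < (1 + Real.sqrt 2) ^ (Real.sqrt 2 / 2) :=
    Real.rpow_pos_of_pos (by positivity) _
  have hV := Real.rpow_pos_of_pos hv (Real.sqrt 2 / 2)
  have hmain := ((hasDerivAt_cos_sub_sin t).rpow_const (p := Real.sqrt 2 / 2 - 1)
    (Or.inl hu.ne')).div
    ((hd.rpow_const (p := Real.sqrt 2 / 2) (Or.inl hv.ne')).mul_const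
      ((1 + Real.sqrt 2) ^ (Real.sqrt 2 / 2))) (mul_pos hV hK).ne'
  convert! hmain using 1
  simp only [qFn, wFn, yFn, F]
  rw [Real.rpow_sub_one hv.ne' (Real.sqrt 2 / 2),
    Real.rpow_sub_one hu.ne' (Real.sqrt 2 / 2 - 1)]
  generalize (1 + Real.sqrt 2) ^ (Real.sqrt 2 / 2) = K at *
  generalize (Real.sqrt 2 - Real.sin t - Real.cos t) ^ (Real.sqrt 2 / 2) = V at *
  generalize (Real.cos t - Real.sin t) ^ (Real.sqrt 2 / 2 - 1) = W at *
  have hs := Real.sin_sq_add_cos_sq t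
  have h2 := Real.sq_sqrt (show (0 : ℝ) ≤ 2 by norm_num)
  generalize Real.sqrt 2 = r at *
  generalize Real.sin t = a at *
  generalize Real.cos t = c at *
  -- Both sides are `F = W / (V * K)` times its logarithmic derivative; `key` matches the latter
  -- using `(c - a)² = (r - a - c) (r + a + c)` and `r² = 2`.
  have hac : a - c = -(c - a) := by ring
  have key : r / 2 * (c - a) / (r - a - c) = (r / 2 * (c + a) + 1) / (c - a) := by
    rw [div_eq_div_iff hv.ne' hu.ne']
    linear_combination r * hs - (c + a) / 2 * h2
  rw [hac]
  generalize c - a = u at *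
  generalize r - a - c = v at *
  have hu' := hu.ne'
  have hv' := hv.ne'
  have hV' := hV.ne'
  have hK' := hK.ne'
  have hl : W / (V * K) * ((c + a) / u) + u * (W / (V * K)) * (1 / u ^ 2)
      = W / (V * K) * (-(c + a) * (r / 2 - 1) / u + (r / 2 * (c + a) + 1) / u) := by
    field_simp
    ring
  rw [hl, ← key]
  field_simp
  ring

lemma hasDerivAt_qFn {t : ℝ} (ht : t ∈ U) : HasDerivAt qFn (F t) t := by
  have h1 := ht.1.ne'
  convert! (hasDerivAt_cos_sub_sin t).mul (hasDerivAt_F ht) using 1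
  simp only [qFn, wFn, yFn]
  field_simp
  ring

/-- The `n`-th derivative of `F` is the total weight of the simsun permutations of rank `n`. -/
lemma iteratedDeriv_F (n : ℕ) : ∀ t ∈ U, iteratedDeriv n F t =
    ∑ π ∈ RB n, wt (wFn t) (yFn t) (F t) (qFn t) (gaps (word π)) := by
  induction n with
  | zero =>
    intro t _
    have h : RB 0 = univ := by
      ext π
      simp [RB, IsSimsun, word, noDD]
    have hw : ∀ π : SignedPerm 0, gaps (word π) = [] := fun π => by simp [word, gaps]
    simp [h, hw, wt, wt0, wt1]
  | succ n ih =>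
    intro t ht
    rw [iteratedDeriv_succ, sum_RB_succ n _ (fun g hg => wt_eq_zero _ _ _ _ hg),
      (Filter.eventuallyEq_of_mem (isOpen_U.mem_nhds ht) ih).deriv_eq]
    refine (HasDerivAt.fun_sum fun π hπ => ?_).deriv
    have hs : IsSimsun π := (Finset.mem_filter.1 hπ).2
    exact hasDerivAt_wt (hasDerivAt_wFn ht) (hasDerivAt_yFn ht) (hasDerivAt_F ht)
      (hasDerivAt_qFn ht) hs.good

lemma iteratedDeriv_F_zero (n : ℕ) : iteratedDeriv n F 0 = (RB n).card := by
  rw [iteratedDeriv_F n 0 zero_mem_U, Finset.card_eq_sum_ones, Nat.cast_sum]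
  refine Finset.sum_congr rfl fun π hπ => ?_
  have hs : IsSimsun π := (Finset.mem_filter.1 hπ).2
  have hw : wFn 0 = 1 := by simp [wFn]
  have hy : yFn 0 = 1 := by simp [yFn]
  have hq : qFn 0 = 1 := by simp [qFn, F_zero]
  rw [hw, hy, hq, F_zero, wt_one hs.good, Nat.cast_one]

lemma AnalyticAt.rpow_const_of_pos {f : ℝ → ℝ} {x : ℝ} (hf : AnalyticAt ℝ f x) (h : 0 < f x)
    (r : ℝ) : AnalyticAt ℝ (fun t => f t ^ r) x := by
  have h1 : AnalyticAt ℝ (fun t => Real.exp (Real.log (f t) * r)) x :=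
    ((hf.log h).mul analyticAt_const).rexp
  refine h1.congr ?_
  filter_upwards [hf.continuousAt.eventually (lt_mem_nhds h)] with t ht
  rw [Real.rpow_def_of_pos ht]

lemma analyticAt_F : AnalyticAt ℝ F 0 := by
  obtain ⟨hu, hv⟩ := zero_mem_U
  have h := one_lt_sqrt_two
  have hs : AnalyticAt ℝ Real.sin 0 := Real.analyticAt_sin
  have hc : AnalyticAt ℝ Real.cos 0 := Real.analyticAt_cos
  refine ((hc.sub hs).rpow_const_of_pos hu _).div
    ((((analyticAt_const.sub hs).sub hc).rpow_const_of_pos hv _).mul analyticAt_const) ?_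
  exact (mul_pos (Real.rpow_pos_of_pos hv _) (Real.rpow_pos_of_pos (by linarith) _)).ne'

/-- The exponential generating function of `r_n = |RB_n|`: with `α = √2`,
`Σ r_n tⁿ/n! = (cos t − sin t)^{α/2−1} / ((α − sin t − cos t)^{α/2} (1+α)^{α/2})`
for `t` near `0`. -/
theorem stmt19 :
    ∃ ε > 0, ∀ t : ℝ, |t| < ε →
      HasSum (fun n : ℕ => ((RB n).card : ℝ) * t ^ n / (Nat.factorial n : ℝ))
        ((Real.cos t - Real.sin t) ^ (Real.sqrt 2 / 2 - 1) /
          ((Real.sqrt 2 - Real.sin t - Real.cos t) ^ (Real.sqrt 2 / 2) *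
            (1 + Real.sqrt 2) ^ (Real.sqrt 2 / 2))) := by
  have h := analyticAt_F.hasFPowerSeriesAt.eventually_hasSum
  rw [Metric.eventually_nhds_iff] at h
  obtain ⟨ε, hε, h⟩ := h
  refine ⟨ε, hε, fun t ht => ?_⟩
  have := h (show dist t 0 < ε by simpa using ht)
  rw [zero_add] at this
  change HasSum _ (F t)
  convert! this using 2 with n
  rw [FormalMultilinearSeries.ofScalars_apply_eq, iteratedDeriv_F_zero, smul_eq_mul]
  ring
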